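/- Let k be a field, let (L, K, M) be a field correspondence over k, let Ω be an algebraically closed field extension of k of transcendence degree 1, and fix a k-algebra embedding PQ : M → Ω. Assume that Aut_k(F) is finite for every subfield F of Ω with PQ(M) ⊆ F and F finite over PQ(M) (the field-theoretic translation of hyperbolicity). Let G_gen be the connected component of the edge PQ in the full generic graph. Then L ∩ K has transcendence degree 0 over k (the correspondence has no core) if and only if G_gen has infinitely many edges. -/

import Mathlib

/-- A field extension `F/k` has transcendence degree one iff some single element
forms a transcendence basis of `F` over `k`. -/
def HasTrdegOne (k F : Type*) [Field k] [Field F] [Algebra k F] : Prop :=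
  ∃ x : F, IsTranscendenceBasis k (fun _ : Unit => x)

section GenericGraph

variable {k M : Type*} [Field k] [Field M] [Algebra k M]
  (L K : IntermediateField k M)
  {Ω : Type*} [Field Ω] [Algebra k Ω]

/-- Two edges (that is, `k`-algebra homomorphisms `M → Ω`) of the full generic graph are
incident to a common vertex: they have the same restriction to `L` (a common blue vertex)
or the same restriction to `K` (a common red vertex). -/
def EdgeStep (e e' : M →ₐ[k] Ω) : Prop :=
  e.comp L.val = e'.comp L.val ∨ e.comp K.val = e'.comp K.val

/-- The edge `e` lies in the connected component `G_gen` of the distinguished edge `PQ`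
of the full generic graph. -/
def InGenericComponent (PQ e : M →ₐ[k] Ω) : Prop :=
  Relation.ReflTransGen (EdgeStep L K) PQ e

end GenericGraph

/-- In transcendence degree one, an intermediate field containing a transcendental element
is such that the top field is algebraic over it. -/
theorem HasTrdegOne.isAlgebraic_of_transcendental {k F : Type*} [Field k] [Field F] [Algebra k F]
    (h : HasTrdegOne k F) {B : Type*} [Field B] [Algebra k B] [Algebra B F] [IsScalarTower k B F]
    (t : B) (ht : Transcendental k t) : Algebra.IsAlgebraic B F := by
  obtain ⟨x, hx⟩ := h
  have ht' : Transcendental k (algebraMap B F t) :=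
    (transcendental_algebraMap_iff (algebraMap B F).injective).2 ht
  have hi : AlgebraicIndependent k (fun _ : Unit => algebraMap B F t) :=
    algebraicIndependent_unique_type_iff.2 ht'
  have hb := hi.isTranscendenceBasis_of_lift_trdeg_le_of_finite
    (by rw [← hx.lift_cardinalMk_eq_trdeg])
  have := hb.isAlgebraic_field
  have hle : IntermediateField.adjoin k (Set.range fun _ : Unit => algebraMap B F t) ≤
      (IsScalarTower.toAlgHom k B F).fieldRange := by
    rw [IntermediateField.adjoin_le_iff]
    rintro _ ⟨_, rfl⟩
    exact ⟨t, rfl⟩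
  have h2 : Algebra.IsAlgebraic (IsScalarTower.toAlgHom k B F).fieldRange F := by
    let := (IntermediateField.inclusion hle).toAlgebra
    have : IsScalarTower (IntermediateField.adjoin k (Set.range fun _ : Unit => algebraMap B F t))
      (IsScalarTower.toAlgHom k B F).fieldRange F := IsScalarTower.of_algebraMap_eq (fun _ => rfl)
    exact Algebra.IsAlgebraic.tower_top
      (K := IntermediateField.adjoin k (Set.range fun _ : Unit => algebraMap B F t)) _
  have h3 : Algebra.IsAlgebraic (IsScalarTower.toAlgHom k B F).range F := h2
  exact Algebra.IsAlgebraic.of_ringHom_of_comp_eq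
    (IsScalarTower.toAlgHom k B F).rangeRestrict.toRingHom (RingHom.id F)
    (AlgHom.rangeRestrict_surjective _) Function.injective_id rfl

theorem finiteDimensional_extendScalars_of_fg {k Ω : Type*} [Field k] [Field Ω] [Algebra k Ω]
    {E F : IntermediateField k Ω} (h : E ≤ F) (hF : F.FG) [Algebra.IsAlgebraic E Ω] :
    FiniteDimensional E (IntermediateField.extendScalars h) := by
  obtain ⟨T, rfl⟩ := hF
  rw [IntermediateField.extendScalars_adjoin]
  exact IntermediateField.finiteDimensional_adjoin
    fun x _ => (Algebra.IsAlgebraic.isAlgebraic x).isIntegral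

/-- Separability propagates along one step. -/
theorem mem_sepClosure_step {B Ω N M : Type*} [Field B] [Field Ω] [Algebra B Ω] [Field N] [Field M]
    [Algebra N M] [Algebra.IsSeparable N M] (e : M →+* Ω)
    (h : ∀ n : N, e (algebraMap N M n) ∈ separableClosure B Ω) (m : M) :
    e m ∈ separableClosure B Ω := by
  let f : N →+* separableClosure B Ω :=
    (e.comp (algebraMap N M)).codRestrict (separableClosure B Ω) h
  have hf : (algebraMap (separableClosure B Ω) Ω).comp f = e.comp (algebraMap N M) := rfl
  have hs : IsSeparable (separableClosure B Ω) (e m) := by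
    have h1 : (minpoly N m).Separable := Algebra.IsSeparable.isSeparable N m
    refine (h1.map (f := f)).of_dvd (minpoly.dvd _ _ ?_)
    rw [Polynomial.aeval_def, Polynomial.eval₂_map, hf, ← Polynomial.hom_eval₂,
      ← Polynomial.aeval_def, minpoly.aeval, map_zero]
  exact mem_separableClosure_iff.2 (IsSeparable.of_algebra_isSeparable_of_isSeparable B hs)

/-- Fixed elements of a stable separable subfield lie in the base. -/
theorem fixed_mem_base {B Ω : Type*} [Field B] [Field Ω] [Algebra B Ω] [IsAlgClosed Ω]
    [Algebra.IsAlgebraic B Ω] (F : IntermediateField B Ω)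
    (hstab : ∀ σ : Ω ≃ₐ[B] Ω, F.map (σ : Ω →ₐ[B] Ω) ≤ F)
    (hsep : F ≤ separableClosure B Ω) (x : F) (hx : ∀ τ : F ≃ₐ[B] F, τ x = x) :
    ∃ b : B, algebraMap B Ω b = x := by
  have : IsAlgClosure B Ω := ⟨inferInstance, inferInstance⟩
  have : Normal B Ω := IsAlgClosure.normal B Ω
  have : Normal B F := IntermediateField.normal_iff_forall_map_le'.2 hstab
  have : Algebra.IsSeparable B F := (le_separableClosure_iff B Ω F).1 hsep
  have : IsGalois B F := ⟨⟩
  obtain ⟨b, hb⟩ := (InfiniteGalois.mem_range_algebraMap_iff_fixed x).2 hx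
  exact ⟨b, by rw [← hb]; rfl⟩

section Main

variable {k M : Type*} [Field k] [Field M] [Algebra k M]
  {L K : IntermediateField k M} {Ω : Type*} [Field Ω] [Algebra k Ω]

theorem EdgeStep.agree {e e' : M →ₐ[k] Ω} (h : EdgeStep L K e e') (x : M) (hL : x ∈ L)
    (hK : x ∈ K) : e x = e' x := by
  rcases h with h | h
  · exact DFunLike.congr_fun h ⟨x, hL⟩
  · exact DFunLike.congr_fun h ⟨x, hK⟩

theorem InGenericComponent.agree {e e' : M →ₐ[k] Ω} (h : InGenericComponent L K e e') (x : M)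
    (hL : x ∈ L) (hK : x ∈ K) : e x = e' x := by
  induction h with
  | refl => rfl
  | tail _ h ih => exact ih.trans (h.agree x hL hK)

theorem InGenericComponent.comp {e e' : M →ₐ[k] Ω} (h : InGenericComponent L K e e')
    (σ : Ω →ₐ[k] Ω) : InGenericComponent L K (σ.comp e) (σ.comp e') := by
  refine Relation.ReflTransGen.lift (fun e => σ.comp e) (fun a b hab => ?_) _ _ h
  rcases hab with h | h
  · left; rw [AlgHom.comp_assoc, h, AlgHom.comp_assoc]
  · right; rw [AlgHom.comp_assoc, h, AlgHom.comp_assoc]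

theorem InGenericComponent.mem_sep [Algebra.IsSeparable L M] [Algebra.IsSeparable K M]
    {B : Type*} [Field B] [Algebra B Ω] {e e' : M →ₐ[k] Ω} (h : InGenericComponent L K e e')
    (h0 : ∀ m, e m ∈ separableClosure B Ω) (m : M) : e' m ∈ separableClosure B Ω := by
  induction h generalizing m with
  | refl => exact h0 m
  | @tail a b _ h ih =>
    rcases h with h | h
    · refine mem_sepClosure_step (N := L) (b : M →+* Ω) (fun n => ?_) m
      have := DFunLike.congr_fun h n
      change b n ∈ _
      rw [← show a n = b n from this]
      exact ih _
    · refine mem_sepClosure_step (N := K) (b : M →+* Ω) (fun n => ?_) m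
      have := DFunLike.congr_fun h n
      change b n ∈ _
      rw [← show a n = b n from this]
      exact ih _

/-- The field generated by a finite component, together with the statement that elements fixed by
all its automorphisms come from `N`, for `N = L` or `N = K`. -/
theorem fixed_mem_of_component [IsAlgClosed Ω] [Algebra.IsSeparable L M] [Algebra.IsSeparable K M]
    (N : IntermediateField k M) [Algebra.IsSeparable N M] (hN : N = L ∨ N = K)
    (PQ : M →ₐ[k] Ω) (hΩ : PQ.toRingHom.IsIntegral)
    (F : IntermediateField k Ω)
    (hF : F = ⨆ e : {e : M →ₐ[k] Ω // InGenericComponent L K PQ e}, e.1.fieldRange)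
    (x : F) (hx : ∀ τ : F ≃ₐ[k] F, τ x = x) : ∃ n ∈ N, PQ n = x := by
  let : Algebra M Ω := PQ.toRingHom.toAlgebra
  have : IsScalarTower k M Ω := IsScalarTower.of_algebraMap_eq fun a => (PQ.commutes a).symm
  have : Algebra.IsIntegral M Ω := ⟨hΩ⟩
  have : Algebra.IsAlgebraic N Ω := Algebra.IsAlgebraic.trans N M Ω
  have : IsScalarTower k N Ω := inferInstance
  have hPQ : ∀ n : N, algebraMap N Ω n = PQ n := fun _ => rfl
  have hNF : ∀ n : N, algebraMap N Ω n ∈ F := by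
    intro n
    rw [hF, hPQ]
    exact (le_iSup (fun e : {e : M →ₐ[k] Ω // InGenericComponent L K PQ e} => e.1.fieldRange)
      ⟨PQ, Relation.ReflTransGen.refl⟩) ⟨(n : M), rfl⟩
  let F' : IntermediateField N Ω := { F with algebraMap_mem' := hNF }
  have hF' : F'.restrictScalars k = F := rfl
  have key := fixed_mem_base F' ?_ ?_ x ?_
  · obtain ⟨b, hb⟩ := key
    exact ⟨b, b.2, hb⟩
  · intro σ
    have : F.map ((σ.restrictScalars k : Ω ≃ₐ[k] Ω) : Ω →ₐ[k] Ω) ≤ F := by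
      conv_lhs => rw [hF]
      rw [IntermediateField.map_iSup]
      refine iSup_le fun e => ?_
      set s : Ω →ₐ[k] Ω := ((σ.restrictScalars k : Ω ≃ₐ[k] Ω) : Ω →ₐ[k] Ω) with hs
      have h1 : InGenericComponent L K PQ (s.comp PQ) := by
        apply Relation.ReflTransGen.single
        have : (PQ.comp N.val) = (s.comp PQ).comp N.val := by
          ext n
          exact (σ.commutes n).symm
        rcases hN with rfl | rfl
        · exact Or.inl this
        · exact Or.inr this
      have h2 : InGenericComponent L K PQ (s.comp e.1) := Relation.ReflTransGen.trans h1 (e.2.comp s)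
      rw [AlgHom.map_fieldRange, hF]
      exact le_iSup (fun e : {e : M →ₐ[k] Ω // InGenericComponent L K PQ e} => e.1.fieldRange)
        ⟨_, h2⟩
    exact this
  · have : F ≤ (separableClosure N Ω).restrictScalars k := by
      rw [hF]
      refine iSup_le ?_
      rintro ⟨e, he⟩ _ ⟨m, rfl⟩
      refine he.mem_sep (B := N) (fun m => ?_) m
      exact mem_sepClosure_step (N := N) (PQ : M →+* Ω)
        (fun n => (separableClosure N Ω).algebraMap_mem n) m
    exact this
  · intro τ
    exact hx (τ.restrictScalars k)

end Main

/-- Proposition `no_core_infinite_graph`.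
Assume every subfield of `Ω` finite over `PQ(M)` has finite `k`-automorphism group
(the field-theoretic translation of hyperbolicity).  Then the correspondence has no core
(`L ∩ K` has transcendence degree `0`, i.e. is algebraic over `k`) if and only if the
connected component `G_gen` of the distinguished edge `PQ` in the full generic graph has
infinitely many edges. -/
theorem no_core_iff_infinitely_many_edges
    (k M : Type*) [Field k] [Field M] [Algebra k M]
    -- `M` is a finitely generated field extension of `k` of transcendence degree 1
    (hfg : (⊤ : IntermediateField k M).FG)
    (htr : HasTrdegOne k M)
    -- the two intermediate fields `L` and `K`, with `M/L` and `M/K` finite and separable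
    (L K : IntermediateField k M)
    [FiniteDimensional L M] [FiniteDimensional K M]
    [Algebra.IsSeparable L M] [Algebra.IsSeparable K M]
    -- an algebraically closed extension `Ω` of `k` of transcendence degree 1
    (Ω : Type*) [Field Ω] [Algebra k Ω] [IsAlgClosed Ω]
    (htrΩ : HasTrdegOne k Ω)
    -- a fixed `k`-algebra embedding `PQ : M → Ω`
    (PQ : M →ₐ[k] Ω)
    -- hyperbolicity: every subfield of `Ω` finite over `PQ(M)` has finite
    -- `k`-automorphism group
    (hhyp : ∀ (F : IntermediateField k Ω) (h : PQ.fieldRange ≤ F),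
      FiniteDimensional PQ.fieldRange (IntermediateField.extendScalars h) →
      Finite (F ≃ₐ[k] F)) :
    Algebra.IsAlgebraic k ↥(L ⊓ K) ↔
      {e : M →ₐ[k] Ω | InGenericComponent L K PQ e}.Infinite := by
  have htr' := htr
  obtain ⟨t, ht⟩ := htr'
  have ht : Transcendental k t := algebraicIndependent_unique_type_iff.1 ht.1
  let : Algebra M Ω := PQ.toRingHom.toAlgebra
  have : IsScalarTower k M Ω := IsScalarTower.of_algebraMap_eq fun a => (PQ.commutes a).symm
  have hΩ : Algebra.IsAlgebraic M Ω := htrΩ.isAlgebraic_of_transcendental t ht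
  constructor
  · intro halg hfin
    have hfin' : Finite {e : M →ₐ[k] Ω // InGenericComponent L K PQ e} := hfin
    obtain ⟨F, hF⟩ : ∃ F : IntermediateField k Ω,
      F = ⨆ e : {e : M →ₐ[k] Ω // InGenericComponent L K PQ e}, e.1.fieldRange := ⟨_, rfl⟩
    have hPQF : PQ.fieldRange ≤ F := by
      rw [hF]
      exact (le_iSup (fun e : {e : M →ₐ[k] Ω // InGenericComponent L K PQ e} => e.1.fieldRange)
        ⟨PQ, Relation.ReflTransGen.refl⟩)
    have hFG : F.FG := by
      rw [hF]
      refine IntermediateField.fg_iSup fun e => ?_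
      rw [AlgHom.fieldRange_eq_map]
      obtain ⟨T, hT⟩ := hfg
      rw [← hT, IntermediateField.adjoin_map]
      exact IntermediateField.fg_adjoin_of_finite (T.finite_toSet.image _)
    have hPQt : Transcendental k (PQ t) := (transcendental_algebraMap_iff
      (algebraMap M Ω).injective).2 ht
    have hΩ' : Algebra.IsAlgebraic PQ.fieldRange Ω := by
      refine htrΩ.isAlgebraic_of_transcendental (⟨PQ t, t, rfl⟩ : PQ.fieldRange) ?_
      exact (transcendental_algebraMap_iff (algebraMap PQ.fieldRange Ω).injective).1 hPQt
    have hH : Finite (F ≃ₐ[k] F) := hhyp F hPQF (finiteDimensional_extendScalars_of_fg hPQF hFG)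
    have hint : PQ.toRingHom.IsIntegral := fun x => (hΩ.isAlgebraic x).isIntegral
    let F₀ : IntermediateField k F := IntermediateField.fixedField (⊤ : Subgroup (F ≃ₐ[k] F))
    have hF₀ : Algebra.IsAlgebraic k F₀ := by
      constructor
      intro x
      have hx : ∀ τ : F ≃ₐ[k] F, τ x = x := fun τ => x.2 ⟨τ, trivial⟩
      obtain ⟨l, hl, hlx⟩ := fixed_mem_of_component L (Or.inl rfl) PQ hint F hF x.1 hx
      obtain ⟨l', hl', hlx'⟩ := fixed_mem_of_component K (Or.inr rfl) PQ hint F hF x.1 hx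
      obtain rfl : l = l' := PQ.toRingHom.injective (hlx.trans hlx'.symm)
      have h1 : IsAlgebraic k (⟨l, hl, hl'⟩ : ↥(L ⊓ K)) := halg.isAlgebraic _
      have h2 : IsAlgebraic k (PQ l) := (h1.algHom (L ⊓ K).val).algHom PQ
      rw [hlx] at h2
      exact (isAlgebraic_algHom_iff F.val Subtype.val_injective).1
        (h2 : IsAlgebraic k (F.val x.1)) |> (isAlgebraic_algHom_iff F₀.val Subtype.val_injective).1
    have hfd : FiniteDimensional F₀ F :=
      inferInstanceAs (FiniteDimensional (FixedPoints.subfield (⊤ : Subgroup (F ≃ₐ[k] F)) F) F)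
    have hk : Algebra.IsAlgebraic k F := Algebra.IsAlgebraic.trans k F₀ F
    exact hPQt ((hk.isAlgebraic (⟨PQ t, hPQF ⟨t, rfl⟩⟩ : F)).algHom F.val)
  · intro hinf
    by_contra hna
    apply hinf
    have : ∃ c : ↥(L ⊓ K), Transcendental k c := by
      by_contra! hc
      exact hna ⟨fun c => not_not.1 (hc c)⟩
    obtain ⟨c, hc⟩ := this
    have : Algebra.IsAlgebraic ↥(L ⊓ K) M := htr.isAlgebraic_of_transcendental c hc
    have : FiniteDimensional ↥(L ⊓ K) M := by
      have h1 := finiteDimensional_extendScalars_of_fg (le_top : L ⊓ K ≤ ⊤) hfg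
      rw [IntermediateField.extendScalars_top] at h1
      exact Module.Finite.equiv IntermediateField.topEquiv.toLinearEquiv
    have : Finite (M →ₐ[↥(L ⊓ K)] Ω) := inferInstance
    refine (Set.finite_range (fun f : M →ₐ[↥(L ⊓ K)] Ω => f.restrictScalars k)).subset ?_
    intro e he
    refine ⟨{ e with commutes' := fun r => ?_ }, ?_⟩
    · exact (InGenericComponent.agree he r r.2.1 r.2.2).symm
    · rfl
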